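/- Let X be a finite group possessing a Hall π-subgroup, and let T be a subnormal subgroup of X of defect at most 2 (i.e., T ⊴ M ⊴ X for some M). Then T possesses a Hall π-subgroup. -/

import Mathlib

/-- A Hall π-subgroup: every prime divisor of its order lies in π,
and its index is coprime to every prime in π. -/
def IsHallPi (π : Set ℕ) {G : Type*} [Group G] (H : Subgroup G) : Prop :=
  (∀ p : ℕ, p.Prime → p ∣ Nat.card H → p ∈ π) ∧
  (∀ p ∈ π, p.Prime → ¬ p ∣ H.index)

/-!
If `N` is normal, then `|N : H ∩ N| = |HN : H|` divides `|G : H|`. Descending along a subnormal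
series from `G` to `T`, the index `|T : H ∩ T|` divides `|G : H|`. Hence if `H` is a Hall
`π`-subgroup of `G`, then `H ∩ T` is a Hall `π`-subgroup of `T`.
-/

section RelIndex

variable {G : Type*} [Group G] (H : Subgroup G)

theorem relIndex_sup_of_normal_right (N : Subgroup G) [N.Normal] :
    H.relIndex (N ⊔ H) = H.relIndex N := by
  let f := Subgroup.quotientSubgroupOfEmbeddingOfLE H (le_sup_left : N ≤ N ⊔ H)
  have f_surjective : Function.Surjective f := by
    rintro ⟨g, hg⟩
    obtain ⟨n, hn, h, hh, rfl⟩ := Subgroup.mem_sup_of_normal_left.mp hg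
    refine ⟨QuotientGroup.mk ⟨n, hn⟩, QuotientGroup.eq.mpr ?_⟩
    simpa [Subgroup.mem_subgroupOf] using hh
  exact (Nat.card_congr (Equiv.ofBijective f ⟨f.injective, f_surjective⟩)).symm

theorem relIndex_dvd_index_of_normal_right (N : Subgroup G) [N.Normal] :
    H.relIndex N ∣ H.index := by
  rw [← relIndex_sup_of_normal_right]
  exact Subgroup.relIndex_dvd_index_of_le le_sup_right

theorem relIndex_dvd_index_of_isSubnormal {T : Subgroup G} (hT : T.IsSubnormal) :
    H.relIndex T ∣ H.index := by
  induction hT with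
  | top => rw [Subgroup.relIndex_top_right]
  | step T M hTM _ hT ih =>
    calc
      H.relIndex T = (H.subgroupOf M).relIndex (T.subgroupOf M) :=
        (Subgroup.relIndex_subgroupOf hTM).symm
      _ ∣ H.relIndex M := relIndex_dvd_index_of_normal_right _ _
      _ ∣ H.index := ih

end RelIndex

theorem hall_subgroup_of_subnormal_defect_two_general {X : Type*} [Group X] [Finite X] {π : Set ℕ}
    {H : Subgroup X} (hH : IsHallPi π H) {T : Subgroup X} (hT : T.IsSubnormal) :
    IsHallPi π (H.subgroupOf T) := by
  have card_dvd : Nat.card (H.subgroupOf T) ∣ Nat.card H :=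
    H.card_comap_dvd_of_injective T.subtype T.subtype_injective
  have index_dvd : (H.subgroupOf T).index ∣ H.index := relIndex_dvd_index_of_isSubnormal H hT
  exact ⟨fun p hp hpH => hH.1 p hp (hpH.trans card_dvd),
    fun p hpπ hp hpH => hH.2 p hpπ hp (hpH.trans index_dvd)⟩

theorem hall_subgroup_of_subnormal_defect_two {X : Type*} [Group X] [Finite X] (π : Set ℕ)
    (H : Subgroup X) (hH : IsHallPi π H)
    (M : Subgroup X) (hM : M.Normal)
    (T : Subgroup X) (hTM : T ≤ M) (hT : (T.subgroupOf M).Normal) :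
    ∃ K : Subgroup T, IsHallPi π K :=
  ⟨H.subgroupOf T,
    hall_subgroup_of_subnormal_defect_two_general hH (.step T M hTM hM.isSubnormal hT)⟩
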